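/- Let f : M → M be a homeomorphism of a compact metric space. Then, given ε > 0, γ > 0 and x ∈ M, there exists δ > 0 such that for every y ∈ M with dist(x,y) < δ one has W^s_ε(y) ⊆ B_γ(W^s_ε(x)). The analogous statement holds for the local unstable sets W^u_ε. -/

import Mathlib

open Metric Set

variable {M : Type*} [MetricSpace M]

/-- Iterates of a homeomorphism, indexed by `ℤ`. -/
def iterZ (f : M ≃ₜ M) (k : ℤ) (x : M) : M := (f.toEquiv ^ k) x

/-- `f` is expansive with expansivity constant `α`. -/
def IsExpansive (f : M ≃ₜ M) (α : ℝ) : Prop :=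
  ∀ x y : M, x ≠ y → ∃ k : ℤ, α < dist (iterZ f k x) (iterZ f k y)

/-- Stable set of `x`. -/
def Ws (f : M ≃ₜ M) (x : M) : Set M :=
  {y | Filter.Tendsto (fun k : ℤ => dist (iterZ f k x) (iterZ f k y)) Filter.atTop (nhds 0)}

/-- Unstable set of `x`. -/
def Wu (f : M ≃ₜ M) (x : M) : Set M :=
  {y | Filter.Tendsto (fun k : ℤ => dist (iterZ f k x) (iterZ f k y)) Filter.atBot (nhds 0)}

/-- Local (`ε`-local) stable set of `x`. -/
def WsLoc (f : M ≃ₜ M) (ε : ℝ) (x : M) : Set M :=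
  {y | ∀ k : ℤ, 0 ≤ k → dist (iterZ f k x) (iterZ f k y) ≤ ε}

/-- Local (`ε`-local) unstable set of `x`. -/
def WuLoc (f : M ≃ₜ M) (ε : ℝ) (x : M) : Set M :=
  {y | ∀ k : ℤ, k ≤ 0 → dist (iterZ f k x) (iterZ f k y) ≤ ε}

/-- The model space `ℝ^r × ℝ^{n-r}`. -/
abbrev ModelSp (n r : ℕ) := (Fin r → ℝ) × (Fin (n - r) → ℝ)

/-- The model hyperbolic linear map `L(a,b) = (a/2, 2b)`. -/
noncomputable def modelL (n r : ℕ) : ModelSp n r → ModelSp n r :=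
  fun q => (fun i => q.1 i / 2, fun i => 2 * q.2 i)

/-- Topologically hyperbolic periodic points of index `r` (`Per_H^r`). -/
def PerHr (f : M ≃ₜ M) (n r : ℕ) : Set M :=
  {p | ∃ l : ℕ, 1 ≤ l ∧ (f.toEquiv ^ l) p = p ∧
    ∃ (U : Set M) (V : Set (ModelSp n r)) (h : U ≃ₜ V),
      IsOpen U ∧ IsOpen V ∧ (0 : ModelSp n r) ∈ V ∧
      ∃ hp : p ∈ U, ((h ⟨p, hp⟩ : V) : ModelSp n r) = 0 ∧
        ∀ z : M, ∀ hz : z ∈ U, ∀ hz' : (f.toEquiv ^ l) z ∈ U,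
          ((h ⟨(f.toEquiv ^ l) z, hz'⟩ : V) : ModelSp n r) = modelL n r (h ⟨z, hz⟩)}

/-- All topologically hyperbolic periodic points (`Per_H`). -/
def PerH (f : M ≃ₜ M) (n : ℕ) : Set M := ⋃ r ∈ Finset.range (n + 1), PerHr f n r

/-- `p` admits a local product structure. -/
def AdmitsLPS (f : M ≃ₜ M) (n : ℕ) (p : M) : Prop :=
  ∃ (k : ℕ) (h : (Fin k → ℝ) × (Fin (n - k) → ℝ) → M) (ε : ℝ),
    0 < ε ∧ Topology.IsEmbedding h ∧ p ∈ Set.range h ∧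
    ∀ x : Fin k → ℝ, ∀ y : Fin (n - k) → ℝ,
      h '' ({x} ×ˢ univ) = WsLoc f ε (h (x, y)) ∩ Set.range h ∧
      h '' (univ ×ˢ {y}) = WuLoc f ε (h (x, y)) ∩ Set.range h

/-
The relation "the orbits of `x` and `y` stay `ε`-close at all times in `T`" is closed in `M × M`,
because each of its instances is a non-strict inequality between continuous functions. When
`0 ∈ T`, the fibres over a neighbourhood of `x` lie in a common ball, which is compact in a proper
space. A set-valued map with closed graph and values in a compact set is upper hemicontinuous, and
upper hemicontinuity at `x` tested on the `γ`-thickening of the fibre over `x` produces `δ`.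
-/

open Filter Topology

theorem upperHemicontinuousAt_of_isClosed_graph {X Y : Type*} [TopologicalSpace X]
    [TopologicalSpace Y] {F : X → Set Y} {x : X} {K : Set Y}
    (hF : IsClosed {p : X × Y | p.2 ∈ F p.1}) (hK : IsCompact K) (hFK : ∀ᶠ y in 𝓝 x, F y ⊆ K) :
    UpperHemicontinuousAt F x := by
  refine .of_forall_isOpen fun u hu hFu => ?_
  have avoids_diff : ∀ᶠ y in 𝓝 x, ∀ z ∈ K \ u, z ∉ F y :=
    (hK.diff hu).eventually_forall_of_forall_eventually fun z hz =>
      hF.isOpen_compl.mem_nhds fun hzF => hz.2 (hFu hzF)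
  filter_upwards [hFK, avoids_diff] with y hyK hy z hz
  by_contra hzu
  exact hy z ⟨hyK hz, hzu⟩ hz

theorem exists_forall_dist_lt_subset_of_upperHemicontinuousAt {X Y : Type*}
    [PseudoMetricSpace X] [PseudoMetricSpace Y] {F : X → Set Y} {x : X} {γ : ℝ}
    (hF : UpperHemicontinuousAt F x) (hγ : 0 < γ) :
    ∃ δ : ℝ, 0 < δ ∧ ∀ y : X, dist x y < δ → F y ⊆ {z | ∃ a ∈ F x, dist z a < γ} := by
  obtain ⟨δ, hδ, hball⟩ := Metric.eventually_nhds_iff.1 <|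
    hF.forall_isOpen (thickening γ (F x)) isOpen_thickening (self_subset_thickening hγ _)
  exact ⟨δ, hδ, fun y hy z hz => mem_thickening_iff.1 (hball (by rwa [dist_comm]) hz)⟩

theorem iterZ_eq_zpow (f : M ≃ₜ M) (k : ℤ) : iterZ f k = ⇑(f ^ k) := by
  let toPerm : (M ≃ₜ M) →* Equiv.Perm M := ⟨⟨Homeomorph.toEquiv, rfl⟩, fun _ _ => rfl⟩
  exact congrArg DFunLike.coe (map_zpow toPerm f k).symm

theorem continuous_iterZ (f : M ≃ₜ M) (k : ℤ) : Continuous (iterZ f k) :=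
  iterZ_eq_zpow f k ▸ (f ^ k).continuous

/-- The points whose orbit stays `ε`-close to the orbit of `x` at all times in `T`. The local stable
set `WsLoc` is the case `T = Ici 0`, the local unstable set `WuLoc` the case `T = Iic 0`. -/
def shadowingSet (f : M ≃ₜ M) (T : Set ℤ) (ε : ℝ) (x : M) : Set M :=
  {y | ∀ k ∈ T, dist (iterZ f k x) (iterZ f k y) ≤ ε}

theorem isClosed_graph_shadowingSet (f : M ≃ₜ M) (T : Set ℤ) (ε : ℝ) :
    IsClosed {p : M × M | p.2 ∈ shadowingSet f T ε p.1} := by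
  change IsClosed {p : M × M | ∀ k ∈ T, dist (iterZ f k p.1) (iterZ f k p.2) ≤ ε}
  simp only [ofPred_forall]
  exact isClosed_biInter fun k _ => isClosed_le
    (((continuous_iterZ f k).comp continuous_fst).dist ((continuous_iterZ f k).comp continuous_snd))
    continuous_const

theorem shadowingSet_subset_closedBall (f : M ≃ₜ M) {T : Set ℤ} (hT : 0 ∈ T) (ε : ℝ) (x : M) :
    shadowingSet f T ε x ⊆ closedBall x ε :=
  fun _ hy => mem_closedBall'.2 (hy 0 hT)

theorem upperHemicontinuous_shadowingSet [ProperSpace M] (f : M ≃ₜ M) {T : Set ℤ} (hT : 0 ∈ T)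
    (ε : ℝ) : UpperHemicontinuous (shadowingSet f T ε) := by
  refine upperHemicontinuous_iff.2 fun x => upperHemicontinuousAt_of_isClosed_graph
    (isClosed_graph_shadowingSet f T ε) (isCompact_closedBall x (ε + 1)) ?_
  filter_upwards [ball_mem_nhds x one_pos] with y hy
  exact (shadowingSet_subset_closedBall f hT ε y).trans <|
    closedBall_subset_closedBall' (by gcongr; exact (mem_ball.1 hy).le)

theorem stmt5_general {M : Type*} [MetricSpace M] [ProperSpace M] (f : M ≃ₜ M)
    (ε γ : ℝ) (hγ : 0 < γ) (x : M) :
    (∃ δ : ℝ, 0 < δ ∧ ∀ y : M, dist x y < δ →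
      WsLoc f ε y ⊆ {z | ∃ a ∈ WsLoc f ε x, dist z a < γ}) ∧
    (∃ δ : ℝ, 0 < δ ∧ ∀ y : M, dist x y < δ →
      WuLoc f ε y ⊆ {z | ∃ a ∈ WuLoc f ε x, dist z a < γ}) := by
  have stable : UpperHemicontinuousAt (WsLoc f ε) x :=
    (upperHemicontinuous_shadowingSet f (T := Ici 0) self_mem_Ici ε).upperHemicontinuousAt x
  have unstable : UpperHemicontinuousAt (WuLoc f ε) x :=
    (upperHemicontinuous_shadowingSet f (T := Iic 0) self_mem_Iic ε).upperHemicontinuousAt x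
  exact ⟨exists_forall_dist_lt_subset_of_upperHemicontinuousAt stable hγ,
    exists_forall_dist_lt_subset_of_upperHemicontinuousAt unstable hγ⟩

/-- **Semicontinuity of local stable and unstable sets.** For a homeomorphism of a
compact metric space, given `ε, γ > 0` and `x`, there is `δ > 0` such that
`dist x y < δ` implies `W^s_ε(y) ⊆ B_γ(W^s_ε(x))`, and analogously for `W^u_ε`. -/
theorem stmt5 {M : Type*} [MetricSpace M] [CompactSpace M] (f : M ≃ₜ M)
    (ε γ : ℝ) (hε : 0 < ε) (hγ : 0 < γ) (x : M) :
    (∃ δ : ℝ, 0 < δ ∧ ∀ y : M, dist x y < δ →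
      WsLoc f ε y ⊆ {z | ∃ a ∈ WsLoc f ε x, dist z a < γ}) ∧
    (∃ δ : ℝ, 0 < δ ∧ ∀ y : M, dist x y < δ →
      WuLoc f ε y ⊆ {z | ∃ a ∈ WuLoc f ε x, dist z a < γ}) :=
  stmt5_general f ε γ hγ x
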